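/- arXiv:1801.10072 — 5 statements merged into one kernel-verified Lean document; each statement's English description precedes it below -/
import Mathlib

section
/- The integer sine depends only on the angle and not on the choice of points on its rays: let A, B, C ∈ ℤ² be pairwise distinct and not collinear, and let A', C' ∈ ℤ² satisfy A' − B = s·(A − B) and C' − B = t·(C − B) for some positive real numbers s, t. Then |det(A'−B, C'−B)| / (ll(BA')·ll(BC')) = |det(A−B, C−B)| / (ll(BA)·ll(BC)). -/
/-- The integer length of the segment `PQ` between two lattice points: the number of lattice
points in the open segment plus one, equivalently the gcd of the coordinates of `Q - P`. -/
def llen (P Q : ℤ × ℤ) : ℕ := Int.gcd (Q.1 - P.1) (Q.2 - P.2)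

/-- The determinant of the 2×2 matrix with columns `u` and `v`. -/
def det2 (u v : ℤ × ℤ) : ℤ := u.1 * v.2 - u.2 * v.1

/-- The integer sine of the angle `∠ABC`. -/
noncomputable def lsin (A B C : ℤ × ℤ) : ℚ :=
  (|det2 (A - B) (C - B)| : ℚ) / ((llen A B : ℚ) * (llen B C : ℚ))

/-!
Scaling the two sides of an angle by `s` and `t` multiplies the determinant by `s * t` and the
integer lengths by `|s|` and `|t|`, and these factors cancel in the integer sine. The arithmetic
point is the scaling of the integer length when `s` is not an integer: by Bézout, `s * gcd x y` is
an integer as soon as `s * x` and `s * y` are.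
-/

section OrderedRing

variable {R : Type*} [CommRing R] [LinearOrder R] [IsStrictOrderedRing R]

lemma natCast_intGcd_eq_abs_mul {s : R} {x y x' y' : ℤ} (hx : (x' : R) = s * x)
    (hy : (y' : R) = s * y) : (Int.gcd x' y' : R) = |s| * Int.gcd x y := by
  obtain ⟨p, hp⟩ : (Int.gcd x y : ℤ) ∣ x := Int.gcd_dvd_left x y
  obtain ⟨q, hq⟩ : (Int.gcd x y : ℤ) ∣ y := Int.gcd_dvd_right x y
  have gcd_factor : Int.gcd x y = Int.gcd x y * Int.gcd p q :=
    calc Int.gcd x y = Int.gcd (Int.gcd x y * p) (Int.gcd x y * q) := by rw [← hp, ← hq]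
      _ = Int.gcd x y * Int.gcd p q := by rw [Int.gcd_mul_left, Int.natAbs_natCast]
  obtain ⟨n, hn⟩ : ∃ n : ℤ, (n : R) = s * Int.gcd x y := by
    refine ⟨x' * Int.gcdA x y + y' * Int.gcdB x y, ?_⟩
    have bezout : (Int.gcd x y : R) = x * Int.gcdA x y + y * Int.gcdB x y :=
      mod_cast Int.gcd_eq_gcd_ab x y
    push_cast
    rw [hx, hy, bezout]
    ring
  have eq_mul_of_factor {z z' r : ℤ} (hz : (z' : R) = s * z) (hr : z = Int.gcd x y * r) :
      z' = n * r := by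
    have : (z' : R) = n * r := by rw [hz, hn, hr]; push_cast; ring
    exact_mod_cast this
  calc (Int.gcd x' y' : R)
      = |(n : R)| * Int.gcd p q := by
        rw [eq_mul_of_factor hx hp, eq_mul_of_factor hy hq, Int.gcd_mul_left, Nat.cast_mul,
          Nat.cast_natAbs, Int.cast_abs]
    _ = |s| * (Int.gcd x y * Int.gcd p q : ℕ) := by
        rw [hn, abs_mul, Nat.abs_cast, Nat.cast_mul, mul_assoc]
    _ = |s| * Int.gcd x y := by rw [← gcd_factor]

lemma natCast_llen_eq_abs_mul {s : R} {B A A' : ℤ × ℤ}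
    (h₁ : ((A'.1 - B.1 : ℤ) : R) = s * ((A.1 - B.1 : ℤ) : R))
    (h₂ : ((A'.2 - B.2 : ℤ) : R) = s * ((A.2 - B.2 : ℤ) : R)) :
    (llen B A' : R) = |s| * llen B A :=
  natCast_intGcd_eq_abs_mul h₁ h₂

end OrderedRing

lemma llen_comm (P Q : ℤ × ℤ) : llen P Q = llen Q P := by
  rw [llen, llen, ← neg_sub P.1, ← neg_sub P.2, Int.gcd_neg, Int.neg_gcd]

lemma llen_ne_zero {P Q : ℤ × ℤ} (h : P ≠ Q) : llen P Q ≠ 0 := by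
  rw [llen, Ne, Int.gcd_eq_zero_iff, sub_eq_zero, sub_eq_zero]
  exact fun ⟨h₁, h₂⟩ ↦ h (Prod.ext h₁.symm h₂.symm)

lemma intCast_det2_eq_mul_mul {R : Type*} [CommRing R] {s t : R} {u v u' v' : ℤ × ℤ}
    (hu₁ : (u'.1 : R) = s * u.1) (hu₂ : (u'.2 : R) = s * u.2)
    (hv₁ : (v'.1 : R) = t * v.1) (hv₂ : (v'.2 : R) = t * v.2) :
    (det2 u' v' : R) = s * t * det2 u v := by
  simp only [det2, Int.cast_sub, Int.cast_mul, hu₁, hu₂, hv₁, hv₂]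
  ring

theorem integer_sine_well_defined_general {K : Type*} [Field K] [LinearOrder K]
    [IsStrictOrderedRing K] {A B C A' C' : ℤ × ℤ} (hAB : A ≠ B) (hBC : B ≠ C) {s t : K}
    (hs : s ≠ 0) (ht : t ≠ 0)
    (hA'1 : ((A'.1 - B.1 : ℤ) : K) = s * ((A.1 - B.1 : ℤ) : K))
    (hA'2 : ((A'.2 - B.2 : ℤ) : K) = s * ((A.2 - B.2 : ℤ) : K))
    (hC'1 : ((C'.1 - B.1 : ℤ) : K) = t * ((C.1 - B.1 : ℤ) : K))
    (hC'2 : ((C'.2 - B.2 : ℤ) : K) = t * ((C.2 - B.2 : ℤ) : K)) :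
    lsin A' B C' = lsin A B C := by
  have llen_A' : (llen A' B : K) = |s| * llen A B := by
    rw [llen_comm A', llen_comm A, natCast_llen_eq_abs_mul hA'1 hA'2]
  have llen_C' : (llen B C' : K) = |t| * llen B C := natCast_llen_eq_abs_mul hC'1 hC'2
  have det_eq : (det2 (A' - B) (C' - B) : K) = s * t * det2 (A - B) (C - B) :=
    intCast_det2_eq_mul_mul hA'1 hA'2 hC'1 hC'2
  have llen_AB_ne : (llen A B : K) ≠ 0 := Nat.cast_ne_zero.mpr (llen_ne_zero hAB)
  have llen_BC_ne : (llen B C : K) ≠ 0 := Nat.cast_ne_zero.mpr (llen_ne_zero hBC)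
  have cast_eq : (lsin A' B C' : K) = lsin A B C := by
    simp only [lsin, Rat.cast_div, Rat.cast_mul, Rat.cast_abs, Rat.cast_intCast, Rat.cast_natCast]
    rw [llen_A', llen_C', det_eq, abs_mul, abs_mul, div_eq_div_iff (by positivity) (by positivity)]
    ring
  exact_mod_cast cast_eq

/-- The integer sine depends only on the angle, not on the choice of points on its rays:
if `A' − B = s·(A − B)` and `C' − B = t·(C − B)` for positive reals `s, t`, then
`|det(A'−B, C'−B)| / (ll(BA')·ll(BC')) = |det(A−B, C−B)| / (ll(BA)·ll(BC))`. -/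
theorem integer_sine_well_defined (A B C A' C' : ℤ × ℤ)
    (hAB : A ≠ B) (hBC : B ≠ C) (hAC : A ≠ C)
    (hncol : det2 (A - B) (C - B) ≠ 0)
    (s t : ℝ) (hs : 0 < s) (ht : 0 < t)
    (hA'1 : ((A'.1 - B.1 : ℤ) : ℝ) = s * ((A.1 - B.1 : ℤ) : ℝ))
    (hA'2 : ((A'.2 - B.2 : ℤ) : ℝ) = s * ((A.2 - B.2 : ℤ) : ℝ))
    (hC'1 : ((C'.1 - B.1 : ℤ) : ℝ) = t * ((C.1 - B.1 : ℤ) : ℝ))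
    (hC'2 : ((C'.2 - B.2 : ℤ) : ℝ) = t * ((C.2 - B.2 : ℤ) : ℝ)) :
    lsin A' B C' = lsin A B C := by
  exact integer_sine_well_defined_general hAB hBC hs.ne' ht.ne' hA'1 hA'2 hC'1 hC'2
end

section
/- Klein's theorem for the lower sail: let ω > 0 be an irrational real number with continued fraction expansion ω = [a₀; a₁, a₂, …] and convergents pₖ/qₖ. Then the set of extreme points of the convex hull of the set S = {(x, y) ∈ ℤ² : x > 0, 0 ≤ y ≤ ωx} is exactly {(1, 0)} ∪ {(q₂ₖ, p₂ₖ) : k ≥ 0}, i.e. the sail vertices of the angle between the positive x-axis and the ray y = ωx (x > 0) are the even-index convergents. -/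
/-- `a` is the sequence of partial quotients of the (regular) continued fraction expansion
`ω = [a₀; a₁, a₂, …]`: there is a sequence of complete quotients `w` with `w 0 = ω`,
`aₙ = ⌊wₙ⌋` and `wₙ₊₁ = 1/(wₙ − aₙ)`. -/
def IsCFExpansion (ω : ℝ) (a : ℕ → ℤ) : Prop :=
  ∃ w : ℕ → ℝ, w 0 = ω ∧ ∀ n, a n = ⌊w n⌋ ∧ w (n + 1) = 1 / (w n - (a n : ℝ))

/-- `p k / q k` are the convergents of the continued fraction with partial quotients `a`:
`p₋₁ = 1, q₋₁ = 0, p₋₂ = 0, q₋₂ = 1` and `pₖ = aₖpₖ₋₁ + pₖ₋₂`, `qₖ = aₖqₖ₋₁ + qₖ₋₂`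
(spelled out for `k = 0, 1` to avoid negative indices). -/
def IsConvergents (a : ℕ → ℤ) (p q : ℕ → ℤ) : Prop :=
  p 0 = a 0 ∧ q 0 = 1 ∧ p 1 = a 1 * a 0 + 1 ∧ q 1 = a 1 ∧
    ∀ k : ℕ, p (k + 2) = a (k + 2) * p (k + 1) + p k ∧
      q (k + 2) = a (k + 2) * q (k + 1) + q k

/-! Put `c₀ = (1, 0)`, `c₁ = (0, 1)` and `cₙ₊₂ = aₙ cₙ₊₁ + cₙ`, so that `cₙ₊₂ = (qₙ, pₙ)`.
Consecutive `cₙ` have determinant `±1` and lie on alternating sides of the ray `y = ωx`.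
The cones spanned by `c₂ₖ` and `c₂ₖ₊₂ = c₂ₖ + a₂ₖ c₂ₖ₊₁` cover the lattice points of the angle, and
each point of such a cone is a sum of the points `c₂ₖ + j c₂ₖ₊₁`, `0 ≤ j ≤ a₂ₖ`. An extreme point of
the hull of a semigroup is not a sum of two nonzero elements, hence is one of these `c₂ₖ + j c₂ₖ₊₁`,
and so an end point `c₂ₖ` or `c₂ₖ₊₂` of their segment. Conversely, the lines through the two
segments that meet at `c₂ₖ` (for `c₀`, the first segment and the `x`-axis) support the hull
there. -/

section ExtremePoints

variable {𝕜 E : Type*} [Field 𝕜] [LinearOrder 𝕜] [IsStrictOrderedRing 𝕜]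
  [AddCommGroup E] [Module 𝕜 E]

theorem isMinOn_convexHull {f : E →ₗ[𝕜] 𝕜} {S : Set E} {v : E} (hf : IsMinOn f S v) :
    IsMinOn f (convexHull 𝕜 S) v :=
  convexHull_min hf (convex_halfSpace_ge f.isLinear (f v))

theorem isExtreme_setOf_isMinOn (f : E →ₗ[𝕜] 𝕜) (A : Set E) :
    IsExtreme 𝕜 A {x ∈ A | IsMinOn f A x} := by
  refine ⟨Set.sep_subset _ _, ?_⟩
  rintro x hx y hy z ⟨-, hz⟩ ⟨s, t, hs, ht, hst, rfl⟩
  rw [isMinOn_iff] at hz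
  have hfx : f x ≤ f (s • x + t • y) := by
    have hfy := mul_le_mul_of_nonneg_left (hz y hy) ht.le
    refine le_of_mul_le_mul_left ?_ hs
    simp only [map_add, map_smul, smul_eq_mul] at hfy ⊢
    linear_combination hfy - (s * f x + t * f y) * hst
  exact ⟨hx, isMinOn_iff.2 fun u hu => hfx.trans (hz u hu)⟩

theorem mem_extremePoints_convexHull_of_isMinOn {f g : E →ₗ[𝕜] 𝕜} {S : Set E} {v : E} (hv : v ∈ S)
    (hf : IsMinOn f S v) (hg : IsMinOn g S v) (hfg : ∀ u, f u = f v → g u = g v → u = v) :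
    v ∈ (convexHull 𝕜 S).extremePoints 𝕜 := by
  have hv' := subset_convexHull 𝕜 S hv
  have hf' := isMinOn_convexHull hf
  have hg' := isMinOn_convexHull hg
  rw [← isExtreme_singleton]
  convert (isExtreme_setOf_isMinOn f (convexHull 𝕜 S)).inter (isExtreme_setOf_isMinOn g _)
  symm
  rw [Set.eq_singleton_iff_unique_mem]
  refine ⟨⟨⟨hv', hf'⟩, hv', hg'⟩, ?_⟩
  rintro u ⟨⟨hu, hfu⟩, -, hgu⟩
  exact hfg u (le_antisymm (hfu hv') (hf' hu)) (le_antisymm (hgu hv') (hg' hu))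

theorem add_notMem_extremePoints_convexHull {S : AddSubsemigroup E} {u w : E} (hu : u ∈ S)
    (hw : w ∈ S) (hu₀ : u ≠ 0) : u + w ∉ (convexHull 𝕜 (S : Set E)).extremePoints 𝕜 := by
  let := invertibleOfNonzero (two_ne_zero (α := 𝕜))
  rintro ⟨-, hext⟩
  have subset_hull {x : E} (hx : x ∈ S) : x ∈ convexHull 𝕜 (S : Set E) :=
    subset_convexHull 𝕜 _ hx
  have hwu : w = u := by
    have hmid : u + w ∈ openSegment 𝕜 (w + w) (u + u) := by
      have hsub := mem_openSegment_sub_add (𝕜 := 𝕜) (u + w) (u - w)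
      rwa [show u + w - (u - w) = w + w by abel, show u + w + (u - w) = u + u by abel] at hsub
    exact add_right_cancel (hext (subset_hull (add_mem hw hw)) (subset_hull (add_mem hu hu)) hmid)
  subst hwu
  have hmid : w + w ∈ openSegment 𝕜 w (w + w + w) := by
    simpa only [add_sub_cancel_right] using mem_openSegment_sub_add (𝕜 := 𝕜) (w + w) w
  exact hu₀ (left_eq_add.1 (hext (subset_hull hw) (subset_hull (add_mem (add_mem hw hw) hw)) hmid))

theorem mem_or_exists_add_eq_of_mem_closure {M : Type*} [Add M] {T : Set M} {x : M}
    (hx : x ∈ AddSubsemigroup.closure T) :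
    x ∈ T ∨ ∃ y ∈ AddSubsemigroup.closure T, ∃ z ∈ AddSubsemigroup.closure T, y + z = x := by
  induction hx using AddSubsemigroup.closure_induction with
  | mem x hx => exact Or.inl hx
  | add x y hx hy _ _ => exact Or.inr ⟨x, hx, y, hy, rfl⟩

theorem extremePoints_convexHull_closure_subset {T : Set E}
    (hT : (0 : E) ∉ AddSubsemigroup.closure T) :
    (convexHull 𝕜 (AddSubsemigroup.closure T : Set E)).extremePoints 𝕜 ⊆ T := by
  intro x hx
  rcases mem_or_exists_add_eq_of_mem_closure (extremePoints_convexHull_subset hx) with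
    hxT | ⟨y, hy, z, hz, rfl⟩
  · exact hxT
  · exact absurd hx (add_notMem_extremePoints_convexHull hy hz (ne_of_mem_of_not_mem hy hT))

theorem eq_or_eq_of_add_zsmul_mem_extremePoints {A : Set E} {v d : E} {n j : ℤ} (hv : v ∈ A)
    (hvn : v + n • d ∈ A) (hj : j ∈ Set.Icc 0 n) (hext : v + j • d ∈ A.extremePoints 𝕜) :
    v = v + j • d ∨ v + n • d = v + j • d := by
  refine (mem_extremePoints_iff_forall_segment.1 hext).2 v hv _ hvn ?_
  rcases (hj.1.trans hj.2).eq_or_lt with rfl | hn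
  · obtain rfl : j = 0 := le_antisymm hj.2 hj.1
    exact right_mem_segment 𝕜 _ _
  have hn' : (0 : 𝕜) < n := Int.cast_pos.2 hn
  rw [segment_eq_image']
  refine ⟨j / n, ⟨div_nonneg (Int.cast_nonneg hj.1) hn'.le,
    (div_le_one hn').2 (Int.cast_le.2 hj.2)⟩, ?_⟩
  simp only [add_sub_cancel_left, ← Int.cast_smul_eq_zsmul 𝕜, smul_smul, div_mul_cancel₀ _ hn'.ne']

end ExtremePoints

theorem zsmul_add_zsmul_mem_closure {G : Type*} [AddCommGroup G] (v d : G) {A n m : ℤ}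
    (hn : 1 ≤ n) (hm : 0 ≤ m) (hmn : m ≤ A * n) :
    n • v + m • d ∈ AddSubsemigroup.closure ((fun j : ℤ => v + j • d) '' Set.Icc 0 A) := by
  have edge_mem {j : ℤ} (hj₀ : 0 ≤ j) (hjA : j ≤ A) :
      v + j • d ∈ AddSubsemigroup.closure ((fun j : ℤ => v + j • d) '' Set.Icc 0 A) :=
    AddSubsemigroup.subset_closure ⟨j, ⟨hj₀, hjA⟩, rfl⟩
  induction n, hn using Int.leInduction generalizing m with
  | base => simpa only [one_smul] using edge_mem hm (by simpa only [mul_one] using hmn)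
  | succ n hn ih =>
    have hA : 0 ≤ A := nonneg_of_mul_nonneg_left (hm.trans hmn) (by positivity)
    rcases le_total m (A * n) with hmA | hmA
    · convert add_mem (ih hm hmA) (edge_mem le_rfl hA) using 1
      module
    · have hAm : 0 ≤ m - A := by nlinarith
      convert add_mem (ih hAm (by linarith)) (edge_mem hA le_rfl) using 1
      module

section PlaneDet

variable {R : Type*} [CommRing R]

/-- The determinant `u₁ v₂ - u₂ v₁` of two plane vectors, as a bilinear map. -/
def planeDet : R × R →ₗ[R] R × R →ₗ[R] R :=
  LinearMap.mk₂ R (fun u v => u.1 * v.2 - u.2 * v.1)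
    (fun _ _ _ => by simp only [Prod.fst_add, Prod.snd_add]; ring)
    (fun _ _ _ => by simp only [Prod.smul_fst, Prod.smul_snd, smul_eq_mul]; ring)
    (fun _ _ _ => by simp only [Prod.fst_add, Prod.snd_add]; ring)
    (fun _ _ _ => by simp only [Prod.smul_fst, Prod.smul_snd, smul_eq_mul]; ring)

theorem planeDet_apply (u v : R × R) : planeDet u v = u.1 * v.2 - u.2 * v.1 := rfl

theorem planeDet_self (u : R × R) : planeDet u u = 0 := by
  rw [planeDet_apply]; ring

theorem neg_planeDet (u v : R × R) : -planeDet u v = planeDet v u := by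
  rw [planeDet_apply, planeDet_apply]; ring

theorem eq_planeDet_smul_add_planeDet_smul {u w : R × R} (huw : planeDet u w = 1) (v : R × R) :
    v = planeDet v w • u + planeDet u v • w := by
  rw [planeDet_apply] at huw
  ext <;> simp only [planeDet_apply, Prod.fst_add, Prod.snd_add, Prod.smul_fst, Prod.smul_snd,
    smul_eq_mul]
  · linear_combination -v.1 * huw
  · linear_combination -v.2 * huw

theorem eq_of_planeDet_eq [IsDomain R] {u v d d' : R × R} (hdd' : planeDet d d' ≠ 0)
    (hd : planeDet u d = planeDet v d) (hd' : planeDet u d' = planeDet v d') : u = v := by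
  simp only [planeDet_apply] at hdd' hd hd'
  ext <;> apply mul_left_cancel₀ hdd'
  · linear_combination d.1 * hd' - d'.1 * hd
  · linear_combination d.2 * hd' - d'.2 * hd

end PlaneDet

section LatticeAngle

/-- The inclusion of the lattice `ℤ²` into the plane `ℝ²`. -/
def intCastProd : ℤ × ℤ →+ ℝ × ℝ :=
  (Int.castAddHom ℝ).prodMap (Int.castAddHom ℝ)

theorem intCastProd_apply (v : ℤ × ℤ) : intCastProd v = ((v.1 : ℝ), (v.2 : ℝ)) := rfl

theorem intCastProd_injective : Function.Injective intCastProd :=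
  Int.cast_injective.prodMap Int.cast_injective

theorem planeDet_intCastProd (u v : ℤ × ℤ) :
    planeDet (intCastProd u) (intCastProd v) = planeDet u v := by
  simp only [planeDet_apply, intCastProd_apply, Int.cast_sub, Int.cast_mul]

theorem intCastProd_mem_extremePoints {S : Set (ℤ × ℤ)} {v d d' : ℤ × ℤ} (hv : v ∈ S)
    (hd : ∀ u ∈ S, planeDet v d ≤ planeDet u d) (hd' : ∀ u ∈ S, planeDet v d' ≤ planeDet u d')
    (hdd' : planeDet d d' ≠ 0) :
    intCastProd v ∈ (convexHull ℝ (intCastProd '' S)).extremePoints ℝ := by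
  have isMinOn_planeDet {d : ℤ × ℤ} (hd : ∀ u ∈ S, planeDet v d ≤ planeDet u d) :
      IsMinOn (planeDet.flip (intCastProd d)) (intCastProd '' S) (intCastProd v) := by
    rw [isMinOn_iff]
    rintro _ ⟨u, hu, rfl⟩
    simpa only [LinearMap.flip_apply, planeDet_intCastProd, Int.cast_le] using hd u hu
  refine mem_extremePoints_convexHull_of_isMinOn (Set.mem_image_of_mem _ hv) (isMinOn_planeDet hd)
    (isMinOn_planeDet hd') fun u => eq_of_planeDet_eq ?_
  rwa [planeDet_intCastProd, Int.cast_ne_zero]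

/-- The signed vertical distance `ωx - y` from a lattice point `(x, y)` up to the line `y = ωx`. -/
def defect (ω : ℝ) : ℤ × ℤ →+ ℝ where
  toFun v := ω * v.1 - v.2
  map_zero' := by simp
  map_add' u v := by simp only [Prod.fst_add, Prod.snd_add, Int.cast_add]; ring

theorem defect_apply (ω : ℝ) (v : ℤ × ℤ) : defect ω v = ω * v.1 - v.2 := rfl

/-- The lattice points `(x, y)` with `x > 0` and `0 ≤ y ≤ ωx`, as a semigroup. -/
def latticeAngle (ω : ℝ) : AddSubsemigroup (ℤ × ℤ) where
  carrier := {v | 0 < v.1 ∧ 0 ≤ v.2 ∧ 0 ≤ defect ω v}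
  add_mem' := fun ⟨hu₁, hu₂, hu⟩ ⟨hv₁, hv₂, hv⟩ =>
    ⟨add_pos hu₁ hv₁, add_nonneg hu₂ hv₂, by rw [map_add]; exact add_nonneg hu hv⟩

variable {ω : ℝ}

theorem mem_latticeAngle {v : ℤ × ℤ} :
    v ∈ latticeAngle ω ↔ 0 < v.1 ∧ 0 ≤ v.2 ∧ 0 ≤ defect ω v := Iff.rfl

theorem mem_latticeAngle_of_defect_pos (hω : 0 < ω) {v : ℤ × ℤ} (hv : 0 ≤ v.2)
    (hdefect : 0 < defect ω v) : v ∈ latticeAngle ω := by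
  refine ⟨?_, hv, hdefect.le⟩
  have hv' : (0 : ℝ) ≤ v.2 := Int.cast_nonneg hv
  rw [defect_apply] at hdefect
  exact_mod_cast pos_of_mul_pos_right (hv'.trans_lt (sub_pos.1 hdefect)) hω.le

theorem planeDet_pos_of_mem_latticeAngle {v d : ℤ × ℤ} (hv : v ∈ latticeAngle ω) (hd : 0 ≤ d.1)
    (hdefect : defect ω d < 0) : 0 < planeDet v d := by
  obtain ⟨hv₁, -, hv⟩ := hv
  have hcross : (planeDet v d : ℝ) = v.1 * -defect ω d + d.1 * defect ω v := by
    simp only [planeDet_apply, defect_apply, Int.cast_sub, Int.cast_mul]; ring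
  rw [← Int.cast_pos (R := ℝ), hcross]
  exact add_pos_of_pos_of_nonneg (mul_pos (Int.cast_pos.2 hv₁) (neg_pos.2 hdefect))
    (mul_nonneg (Int.cast_nonneg hd) hv)

end LatticeAngle

section ConvergentVector

/-- The vectors `(q, p)` of numerators and denominators of the convergents, starting two steps
early: `convergentVector a (n + 2)` is `(qₙ, pₙ)`, preceded by `(q₋₂, p₋₂) = (1, 0)` and
`(q₋₁, p₋₁) = (0, 1)`. -/
def convergentVector (a : ℕ → ℤ) : ℕ → ℤ × ℤ
  | 0 => (1, 0)
  | 1 => (0, 1)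
  | n + 2 => convergentVector a n + a n • convergentVector a (n + 1)

variable {a : ℕ → ℤ}

theorem convergentVector_zero : convergentVector a 0 = (1, 0) := rfl

theorem convergentVector_one : convergentVector a 1 = (0, 1) := rfl

theorem convergentVector_add_two (n : ℕ) :
    convergentVector a (n + 2) = convergentVector a n + a n • convergentVector a (n + 1) := rfl

theorem IsConvergents.convergentVector_add_two_eq {p q : ℕ → ℤ} (h : IsConvergents a p q) (n : ℕ) :
    convergentVector a (n + 2) = (q n, p n) := by
  obtain ⟨hp₀, hq₀, hp₁, hq₁, hpq⟩ := h
  induction n using Nat.twoStepInduction with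
  | zero => simp [convergentVector, hp₀, hq₀]
  | one => simp [convergentVector, hp₁, hq₁, add_comm]
  | more n ih ih' =>
    rw [convergentVector_add_two, ih, ih', (hpq n).1, (hpq n).2]
    ext <;> simp [add_comm]

theorem planeDet_convergentVector_succ (n : ℕ) :
    planeDet (convergentVector a n) (convergentVector a (n + 1)) = (-1) ^ n := by
  induction n with
  | zero => simp [planeDet_apply, convergentVector_zero, convergentVector_one]
  | succ n ih =>
    rw [convergentVector_add_two, map_add, map_smul, planeDet_self, ← neg_planeDet, ih, pow_succ]
    simp

theorem planeDet_convergentVector_even (k : ℕ) :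
    planeDet (convergentVector a (2 * k)) (convergentVector a (2 * k + 1)) = 1 := by
  rw [planeDet_convergentVector_succ, (even_two_mul k).neg_one_pow]

theorem planeDet_convergentVector_odd (k : ℕ) :
    planeDet (convergentVector a (2 * k + 1)) (convergentVector a (2 * k + 2)) = -1 := by
  rw [planeDet_convergentVector_succ, (odd_two_mul_add_one k).neg_one_pow]

theorem convergentVector_nonneg (ha : ∀ n, 0 ≤ a n) (n : ℕ) : 0 ≤ convergentVector a n := by
  induction n using Nat.twoStepInduction with
  | zero => simp [convergentVector_zero, Prod.le_def]
  | one => simp [convergentVector_one, Prod.le_def]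
  | more n ih ih' =>
    rw [convergentVector_add_two]
    exact add_nonneg ih (zsmul_nonneg ih' (ha n))

theorem exists_planeDet_convergentVector_le (ha : ∀ n, 0 < a (n + 1)) {v : ℤ × ℤ} (hv : 0 ≤ v.2)
    (hpos : ∀ k, 0 < planeDet v (convergentVector a (2 * k + 1))) :
    ∃ k, 0 ≤ planeDet (convergentVector a (2 * k)) v ∧
      planeDet (convergentVector a (2 * k)) v ≤
        a (2 * k) * planeDet v (convergentVector a (2 * k + 1)) := by
  set β : ℕ → ℤ := fun k => planeDet (convergentVector a (2 * k)) v
  have hβ (k : ℕ) :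
      β (k + 1) = β k - a (2 * k) * planeDet v (convergentVector a (2 * k + 1)) := by
    simp only [β, mul_add, mul_one, convergentVector_add_two, map_add, map_smul,
      LinearMap.add_apply, LinearMap.smul_apply, smul_eq_mul,
      ← neg_planeDet v (convergentVector a (2 * k + 1))]
    ring
  by_contra! hno
  have hβ_nonneg (k : ℕ) : 0 ≤ β k := by
    induction k with
    | zero => simpa [β, convergentVector_zero, planeDet_apply] using hv
    | succ k ih => exact hβ k ▸ sub_nonneg.2 (hno k ih).le
  have hβ_anti : StrictAnti fun k => (β (k + 1)).toNat := by
    refine strictAnti_nat_of_succ_lt fun k => ?_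
    have hstep := hβ (k + 1)
    have hdecr : 0 < a (2 * (k + 1)) * planeDet v (convergentVector a (2 * (k + 1) + 1)) :=
      mul_pos (ha (2 * k + 1)) (hpos (k + 1))
    have hnonneg := hβ_nonneg (k + 1 + 1)
    omega
  exact not_strictAnti_of_wellFoundedLT _ hβ_anti

/-- The lattice points on the edges of the sail: those on the segments from
`convergentVector a (2 * k)` to `convergentVector a (2 * k + 2)`. -/
def sailPoints (a : ℕ → ℤ) : Set (ℤ × ℤ) :=
  ⋃ k : ℕ, (fun j : ℤ => convergentVector a (2 * k) + j • convergentVector a (2 * k + 1)) ''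
    Set.Icc 0 (a (2 * k))

end ConvergentVector

namespace IsCFExpansion

variable {ω : ℝ} {a : ℕ → ℤ}

theorem exists_completeQuotients (hcf : IsCFExpansion ω a) (hirr : Irrational ω) :
    ∃ w : ℕ → ℝ, w 0 = ω ∧
      ∀ n, a n = ⌊w n⌋ ∧ 0 < w n - a n ∧ w (n + 1) * (w n - a n) = 1 := by
  obtain ⟨w, hw₀, hw⟩ := hcf
  have hw_irr (n : ℕ) : Irrational (w n) := by
    induction n with
    | zero => exact hw₀ ▸ hirr
    | succ n ih => rw [(hw n).2, one_div]; exact (ih.sub_intCast _).inv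
  have hfract (n : ℕ) : 0 < w n - a n := by
    rw [(hw n).1]
    exact sub_pos.2 ((Int.floor_le _).lt_of_ne ((hw_irr n).ne_int _).symm)
  exact ⟨w, hw₀, fun n => ⟨(hw n).1, hfract n, by
    rw [(hw n).2, one_div_mul_cancel (hfract n).ne']⟩⟩

theorem partialQuotient_zero_nonneg (hcf : IsCFExpansion ω a) (hω : 0 ≤ ω) : 0 ≤ a 0 := by
  obtain ⟨w, hw₀, hw⟩ := hcf
  rw [(hw 0).1, hw₀]
  exact Int.floor_nonneg.2 hω

theorem partialQuotient_succ_pos (hcf : IsCFExpansion ω a) (hirr : Irrational ω) (n : ℕ) :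
    0 < a (n + 1) := by
  obtain ⟨w, -, hw⟩ := hcf.exists_completeQuotients hirr
  obtain ⟨hfloor, hfract, hmul⟩ := hw n
  have hfract_le : w n - a n ≤ 1 := by
    rw [hfloor]; exact (Int.fract_lt_one (w n)).le
  rw [(hw (n + 1)).1, Int.floor_pos, eq_one_div_of_mul_eq_one_left hmul]
  exact (one_le_div hfract).2 hfract_le

theorem partialQuotient_nonneg (hcf : IsCFExpansion ω a) (hω : 0 ≤ ω) (hirr : Irrational ω) :
    ∀ n, 0 ≤ a n
  | 0 => hcf.partialQuotient_zero_nonneg hω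
  | n + 1 => (hcf.partialQuotient_succ_pos hirr n).le

theorem neg_one_pow_mul_defect_pos (hcf : IsCFExpansion ω a) (hω : 0 < ω) (hirr : Irrational ω)
    (n : ℕ) : 0 < (-1) ^ n * defect ω (convergentVector a n) := by
  obtain ⟨w, hw₀, hw⟩ := hcf.exists_completeQuotients hirr
  have hw_pos : ∀ n, 0 < w n
    | 0 => hw₀ ▸ hω
    | n + 1 => pos_of_mul_pos_left ((hw n).2.2 ▸ one_pos) (hw n).2.1.le
  have defect_eq (n : ℕ) : defect ω (convergentVector a n) =
      -w n * defect ω (convergentVector a (n + 1)) := by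
    induction n with
    | zero => simp [defect_apply, convergentVector_zero, convergentVector_one, hw₀]
    | succ n ih =>
      rw [convergentVector_add_two, map_add, map_zsmul, ih, zsmul_eq_mul]
      linear_combination -defect ω (convergentVector a (n + 1)) * (hw n).2.2
  induction n with
  | zero => simpa [defect_apply, convergentVector_zero] using hω
  | succ n ih =>
    refine pos_of_mul_pos_right (a := w n) ?_ (hw_pos n).le
    calc 0 < (-1) ^ n * defect ω (convergentVector a n) := ih
      _ = w n * ((-1) ^ (n + 1) * defect ω (convergentVector a (n + 1))) := by
        rw [defect_eq n]; ring

theorem defect_even_pos (hcf : IsCFExpansion ω a) (hω : 0 < ω) (hirr : Irrational ω) (k : ℕ) :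
    0 < defect ω (convergentVector a (2 * k)) := by
  simpa using hcf.neg_one_pow_mul_defect_pos hω hirr (2 * k)

theorem defect_odd_neg (hcf : IsCFExpansion ω a) (hω : 0 < ω) (hirr : Irrational ω) (k : ℕ) :
    defect ω (convergentVector a (2 * k + 1)) < 0 := by
  simpa [pow_succ] using hcf.neg_one_pow_mul_defect_pos hω hirr (2 * k + 1)

theorem sailPoints_subset_latticeAngle (hcf : IsCFExpansion ω a) (hω : 0 < ω)
    (hirr : Irrational ω) : sailPoints a ⊆ latticeAngle ω := by
  refine Set.iUnion_subset fun k => ?_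
  rintro _ ⟨j, ⟨hj₀, hj⟩, rfl⟩
  have hc := convergentVector_nonneg (hcf.partialQuotient_nonneg hω.le hirr)
  have hnext := hcf.defect_even_pos hω hirr (k + 1)
  refine mem_latticeAngle_of_defect_pos hω (add_nonneg (hc _) (zsmul_nonneg (hc _) hj₀)).2 ?_
  calc 0 < defect ω (convergentVector a (2 * k) + a (2 * k) • convergentVector a (2 * k + 1)) :=
        hnext
    _ ≤ defect ω (convergentVector a (2 * k) + j • convergentVector a (2 * k + 1)) := by
      rw [map_add, map_add, map_zsmul, map_zsmul, zsmul_eq_mul, zsmul_eq_mul]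
      exact add_le_add le_rfl
        (mul_le_mul_of_nonpos_right (Int.cast_le.2 hj) (hcf.defect_odd_neg hω hirr k).le)

theorem planeDet_convergentVector_odd_pos (hcf : IsCFExpansion ω a) (hω : 0 < ω)
    (hirr : Irrational ω) {v : ℤ × ℤ} (hv : v ∈ latticeAngle ω) (k : ℕ) :
    0 < planeDet v (convergentVector a (2 * k + 1)) :=
  planeDet_pos_of_mem_latticeAngle hv
    (convergentVector_nonneg (hcf.partialQuotient_nonneg hω.le hirr) _).1
    (hcf.defect_odd_neg hω hirr k)

theorem latticeAngle_eq_closure_sailPoints (hcf : IsCFExpansion ω a) (hω : 0 < ω)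
    (hirr : Irrational ω) : latticeAngle ω = AddSubsemigroup.closure (sailPoints a) := by
  refine le_antisymm (fun v hv => ?_)
    (AddSubsemigroup.closure_le.2 (hcf.sailPoints_subset_latticeAngle hω hirr))
  have hpos := hcf.planeDet_convergentVector_odd_pos hω hirr hv
  obtain ⟨k, hk₀, hk⟩ :=
    exists_planeDet_convergentVector_le (hcf.partialQuotient_succ_pos hirr) hv.2.1 hpos
  rw [eq_planeDet_smul_add_planeDet_smul (planeDet_convergentVector_even k) v]
  exact AddSubsemigroup.closure_mono (Set.subset_iUnion _ k)
    (zsmul_add_zsmul_mem_closure _ _ (hpos k) hk₀ hk)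

theorem convergentVector_even_mem_latticeAngle (hcf : IsCFExpansion ω a) (hω : 0 < ω)
    (hirr : Irrational ω) (k : ℕ) : convergentVector a (2 * k) ∈ latticeAngle ω :=
  mem_latticeAngle_of_defect_pos hω
    (convergentVector_nonneg (hcf.partialQuotient_nonneg hω.le hirr) _).2
    (hcf.defect_even_pos hω hirr k)

theorem extremePoints_subset_sailPoints (hcf : IsCFExpansion ω a) (hω : 0 < ω)
    (hirr : Irrational ω) :
    (convexHull ℝ (intCastProd '' latticeAngle ω)).extremePoints ℝ ⊆
      intCastProd '' sailPoints a := by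
  have hclosure : intCastProd '' latticeAngle ω =
      AddSubsemigroup.closure (intCastProd '' sailPoints a) := by
    rw [hcf.latticeAngle_eq_closure_sailPoints hω hirr]
    exact congrArg SetLike.coe (intCastProd.toAddHom.map_mclosure (sailPoints a))
  have hzero : (0 : ℝ × ℝ) ∉ AddSubsemigroup.closure (intCastProd '' sailPoints a) := by
    rw [← SetLike.mem_coe, ← hclosure, ← map_zero intCastProd,
      intCastProd_injective.mem_set_image]
    exact fun h => lt_irrefl _ h.1
  rw [hclosure]
  exact extremePoints_convexHull_closure_subset hzero

theorem extremePoints_subset_convergentVector_even (hcf : IsCFExpansion ω a) (hω : 0 < ω)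
    (hirr : Irrational ω) :
    (convexHull ℝ (intCastProd '' latticeAngle ω)).extremePoints ℝ ⊆
      Set.range fun k : ℕ => intCastProd (convergentVector a (2 * k)) := by
  intro x hx
  obtain ⟨v, hv, rfl⟩ := hcf.extremePoints_subset_sailPoints hω hirr hx
  obtain ⟨k, j, hj, rfl⟩ := Set.mem_iUnion.1 hv
  have vertex_mem (k : ℕ) : intCastProd (convergentVector a (2 * k)) ∈
      convexHull ℝ (intCastProd '' latticeAngle ω) :=
    subset_convexHull ℝ _
      (Set.mem_image_of_mem _ (hcf.convergentVector_even_mem_latticeAngle hω hirr k))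
  have hnext := vertex_mem (k + 1)
  rw [mul_add, mul_one, convergentVector_add_two] at hnext
  simp only [map_add, map_zsmul] at hnext hx ⊢
  rcases eq_or_eq_of_add_zsmul_mem_extremePoints (vertex_mem k) hnext hj hx with h | h
  · exact ⟨k, h⟩
  · refine ⟨k + 1, ?_⟩
    simp only [mul_add, mul_one, convergentVector_add_two, map_add, map_zsmul]
    exact h

theorem intCastProd_convergentVector_even_mem_extremePoints (hcf : IsCFExpansion ω a) (hω : 0 < ω)
    (hirr : Irrational ω) (k : ℕ) :
    intCastProd (convergentVector a (2 * k)) ∈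
      (convexHull ℝ (intCastProd '' latticeAngle ω)).extremePoints ℝ := by
  have hmem := hcf.convergentVector_even_mem_latticeAngle hω hirr k
  have supports {k : ℕ} {v : ℤ × ℤ} (hv : planeDet v (convergentVector a (2 * k + 1)) = 1) :
      ∀ u ∈ (latticeAngle ω : Set (ℤ × ℤ)), planeDet v (convergentVector a (2 * k + 1)) ≤
        planeDet u (convergentVector a (2 * k + 1)) :=
    fun u hu => hv.trans_le (hcf.planeDet_convergentVector_odd_pos hω hirr hu k)
  cases k with
  | zero =>
    refine intCastProd_mem_extremePoints (d' := (-1, 0)) hmem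
      (supports (planeDet_convergentVector_even 0)) ?_ ?_
    · intro u hu
      simpa [planeDet_apply, convergentVector_zero] using hu.2.1
    · simp [planeDet_apply, convergentVector_one]
  | succ k =>
    have hnext :
        planeDet (convergentVector a (2 * (k + 1))) (convergentVector a (2 * k + 1)) = 1 := by
      rw [← neg_planeDet, mul_add, mul_one, planeDet_convergentVector_odd, neg_neg]
    refine intCastProd_mem_extremePoints hmem (supports hnext)
      (supports (planeDet_convergentVector_even (k + 1))) ?_
    rw [mul_add, mul_one, convergentVector_add_two (2 * k + 1), map_add, planeDet_self, map_smul,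
      planeDet_convergentVector_odd]
    simpa using (hcf.partialQuotient_succ_pos hirr (2 * k)).ne'

theorem extremePoints_convexHull_latticeAngle (hcf : IsCFExpansion ω a) (hω : 0 < ω)
    (hirr : Irrational ω) :
    (convexHull ℝ (intCastProd '' latticeAngle ω)).extremePoints ℝ =
      Set.range fun k : ℕ => intCastProd (convergentVector a (2 * k)) :=
  (hcf.extremePoints_subset_convergentVector_even hω hirr).antisymm
    (Set.range_subset_iff.2 (hcf.intCastProd_convergentVector_even_mem_extremePoints hω hirr))

end IsCFExpansion

/-- Klein's theorem for the lower sail: for irrational `ω > 0`, the extreme points of the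
convex hull of `S = {(x, y) ∈ ℤ² : x > 0, 0 ≤ y ≤ ωx}` are exactly `(1, 0)` together with
the even-index convergents `(q₂ₖ, p₂ₖ)`. -/
theorem klein_lower_sail (ω : ℝ) (hω : 0 < ω) (hirr : Irrational ω)
    (a p q : ℕ → ℤ) (hcf : IsCFExpansion ω a) (hconv : IsConvergents a p q) :
    Set.extremePoints ℝ (convexHull ℝ {v : ℝ × ℝ | ∃ x y : ℤ,
        v = ((x : ℝ), (y : ℝ)) ∧ 0 < x ∧ 0 ≤ y ∧ (y : ℝ) ≤ ω * (x : ℝ)}) =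
      {((1 : ℝ), (0 : ℝ))} ∪
        {v : ℝ × ℝ | ∃ k : ℕ, v = ((q (2 * k) : ℝ), (p (2 * k) : ℝ))} := by
  have hangle : {v : ℝ × ℝ | ∃ x y : ℤ,
      v = ((x : ℝ), (y : ℝ)) ∧ 0 < x ∧ 0 ≤ y ∧ (y : ℝ) ≤ ω * (x : ℝ)} =
      intCastProd '' latticeAngle ω := by
    ext v
    simp [mem_latticeAngle, defect_apply, intCastProd_apply, eq_comm, and_comm]
  have hvertices : {((1 : ℝ), (0 : ℝ))} ∪
      {v : ℝ × ℝ | ∃ k : ℕ, v = ((q (2 * k) : ℝ), (p (2 * k) : ℝ))} =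
      Set.range fun k : ℕ => intCastProd (convergentVector a (2 * k)) := by
    ext v
    rw [Set.mem_range, ← Nat.or_exists_add_one]
    simp [mul_add, hconv.convergentVector_add_two_eq, convergentVector_zero, intCastProd_apply,
      eq_comm]
  rw [hangle, hvertices, hcf.extremePoints_convexHull_latticeAngle hω hirr]
end

section
/- Edge–angle duality between the two Klein sails (Karpenkov): let ω > 1 be irrational with continued fraction expansion ω = [a₀; a₁, a₂, …] and convergents pₖ/qₖ. Define A₋₁ = (1, 0), Aₖ = (q₂ₖ, p₂ₖ) for k ≥ 0 (vertices of the sail of the angle between the x-axis and the ω-ray) and B₋₁ = (0, 1), Bₖ = (q₂ₖ₊₁, p₂ₖ₊₁) for k ≥ 0 (vertices of the sail of the angle between the ω-ray and the y-axis). Then for every k ≥ 0: lsin∠Aₖ₋₁AₖAₖ₊₁ = ll(Bₖ₋₁Bₖ), and lsin∠Bₖ₋₁BₖBₖ₊₁ = ll(AₖAₖ₊₁). -/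
/-! Interleave the vertices of the two sails as `v = A₋₁, B₋₁, A₀, B₀, …`. The recurrence of the
convergents is `v (n + 2) = v n + a n • v (n + 1)`, so the edges of one sail are integer multiples
of the vertices of the other, and consecutive vertices form a basis of `ℤ²`. Hence the angle at
`v (n + 2)` is spanned by the primitive vectors `v (n + 1)` and
`v (n + 3) = v (n + 1) + a (n + 1) • v (n + 2)`: both its integer sine and the integer length of the
segment from `v (n + 1)` to `v (n + 3)` are `|a (n + 1)|`. -/

section IntegerGeometry

variable (u v : ℤ × ℤ)

lemma det2_swap : det2 v u = -det2 u v := by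
  simp only [det2]
  ring

lemma det2_add_smul_left (m : ℤ) : det2 (u + m • v) v = det2 u v := by
  simp only [det2, Prod.fst_add, Prod.snd_add, Prod.smul_fst, Prod.smul_snd, smul_eq_mul]
  ring

lemma det2_add_smul_right (m : ℤ) (w : ℤ × ℤ) : det2 u (u + m • w) = m * det2 u w := by
  simp only [det2, Prod.fst_add, Prod.snd_add, Prod.smul_fst, Prod.smul_snd, smul_eq_mul]
  ring

lemma det2_neg_smul_smul (m n : ℤ) : det2 (-(m • u)) (n • v) = -(m * n * det2 u v) := by
  simp only [det2, Prod.fst_neg, Prod.snd_neg, Prod.smul_fst, Prod.smul_snd, smul_eq_mul]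
  ring

variable {u v} in
lemma gcd_eq_one_of_isUnit_det2 (h : IsUnit (det2 u v)) : Int.gcd u.1 u.2 = 1 := by
  obtain ⟨c, hc⟩ := h.exists_left_inv
  refine Int.isCoprime_iff_gcd_eq_one.mp ⟨c * v.2, -(c * v.1), ?_⟩
  rw [← hc, det2]
  ring

lemma llen_add_smul (P : ℤ × ℤ) (m : ℤ) :
    llen P (P + m • u) = m.natAbs * Int.gcd u.1 u.2 := by
  simp only [llen, Prod.fst_add, Prod.snd_add, Prod.smul_fst, Prod.smul_snd, smul_eq_mul,
    add_sub_cancel_left, Int.gcd_mul_left]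

lemma lsin_add_smul (P : ℤ × ℤ) {m n : ℤ} (hm : m ≠ 0) (hn : n ≠ 0) :
    lsin P (P + m • u) (P + m • u + n • v) =
      |(det2 u v : ℚ)| / (Int.gcd u.1 u.2 * Int.gcd v.1 v.2) := by
  have hmn : |(m : ℚ)| * |(n : ℚ)| ≠ 0 := by positivity
  have hdet : det2 (P - (P + m • u)) (P + m • u + n • v - (P + m • u)) =
      -(m * n * det2 u v) := by
    rw [sub_add_cancel_left, add_sub_cancel_left, det2_neg_smul_smul]
  rw [lsin, hdet, llen_add_smul, llen_add_smul]
  push_cast [Nat.cast_natAbs]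
  rw [abs_neg, abs_mul, abs_mul, mul_mul_mul_comm, mul_div_mul_left _ _ hmn]

end IntegerGeometry

/-- The interleaved sequence `A₋₁, B₋₁, A₀, B₀, A₁, B₁, …` of the vertices of both sails, generated
from the partial quotients `a`. Its indices are those of the convergents shifted by two:
`sailVertex a (k + 2)` is `(qₖ, pₖ)`. -/
def sailVertex (a : ℕ → ℤ) : ℕ → ℤ × ℤ
  | 0 => (1, 0)
  | 1 => (0, 1)
  | n + 2 => sailVertex a n + a n • sailVertex a (n + 1)

section SailVertex

variable (a : ℕ → ℤ) (n : ℕ)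

lemma sailVertex_add_two : sailVertex a (n + 2) = sailVertex a n + a n • sailVertex a (n + 1) :=
  rfl

lemma det2_sailVertex_succ : det2 (sailVertex a n) (sailVertex a (n + 1)) = (-1) ^ n := by
  induction n with
  | zero => rfl
  | succ n ih => rw [sailVertex_add_two, det2_swap, det2_add_smul_left, ih, pow_succ, mul_neg_one]

lemma gcd_sailVertex : Int.gcd (sailVertex a n).1 (sailVertex a n).2 = 1 := by
  refine gcd_eq_one_of_isUnit_det2 (v := sailVertex a (n + 1)) ?_
  rw [det2_sailVertex_succ]
  exact isUnit_neg_one.pow n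

lemma llen_sailVertex_add_two :
    llen (sailVertex a n) (sailVertex a (n + 2)) = (a n).natAbs := by
  rw [sailVertex_add_two, llen_add_smul, gcd_sailVertex, mul_one]

lemma abs_det2_sailVertex_add_two :
    |det2 (sailVertex a n) (sailVertex a (n + 2))| = |a n| := by
  rw [sailVertex_add_two, det2_add_smul_right, det2_sailVertex_succ, abs_mul, abs_neg_one_pow,
    mul_one]

variable {a n} in
theorem lsin_sailVertex_eq_llen (h₀ : a n ≠ 0) (h₂ : a (n + 2) ≠ 0) :
    lsin (sailVertex a n) (sailVertex a (n + 2)) (sailVertex a (n + 4)) =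
      llen (sailVertex a (n + 1)) (sailVertex a (n + 3)) := by
  rw [sailVertex_add_two a (n + 2), sailVertex_add_two a n, lsin_add_smul _ _ _ h₀ h₂,
    gcd_sailVertex, gcd_sailVertex, Nat.cast_one, mul_one, div_one, ← Int.cast_abs,
    abs_det2_sailVertex_add_two, llen_sailVertex_add_two, Nat.cast_natAbs]

end SailVertex

lemma IsConvergents.sailVertex_add_two_eq {a p q : ℕ → ℤ} (h : IsConvergents a p q) (k : ℕ) :
    sailVertex a (k + 2) = (q k, p k) := by
  obtain ⟨hp₀, hq₀, hp₁, hq₁, hrec⟩ := h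
  induction k using Nat.twoStepInduction with
  | zero => simp [sailVertex, hp₀, hq₀]
  | one => simp [sailVertex, hp₁, hq₁, add_comm]
  | more k ih₀ ih₁ =>
    rw [sailVertex_add_two, ih₀, ih₁, (hrec k).1, (hrec k).2]
    ext <;> simp [add_comm]

namespace IsCFExpansion

variable {ω : ℝ} {a : ℕ → ℤ}

lemma apply_zero (h : IsCFExpansion ω a) : a 0 = ⌊ω⌋ := by
  obtain ⟨w, rfl, hw⟩ := h
  exact (hw 0).1

lemma tail (h : IsCFExpansion ω a) : IsCFExpansion (Int.fract ω)⁻¹ fun n ↦ a (n + 1) := by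
  obtain ⟨w, rfl, hw⟩ := h
  refine ⟨fun n ↦ w (n + 1), ?_, fun n ↦ hw (n + 1)⟩
  rw [← Int.self_sub_floor, ← (hw 0).1, inv_eq_one_div]
  exact (hw 0).2

lemma pos (h : IsCFExpansion ω a) (hω : 1 < ω) (hirr : Irrational ω) (n : ℕ) : 0 < a n := by
  induction n generalizing ω a with
  | zero =>
    rw [h.apply_zero]
    exact Int.floor_pos.mpr hω.le
  | succ _ ih =>
    have hfract : Irrational (Int.fract ω) := hirr.sub_intCast ⌊ω⌋
    have hfract_pos : 0 < Int.fract ω := (Int.fract_nonneg ω).lt_of_ne' hfract.ne_zero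
    exact ih h.tail ((one_lt_inv₀ hfract_pos).mpr (Int.fract_lt_one ω)) hfract.inv

end IsCFExpansion

theorem edge_angle_duality_general {a p q : ℕ → ℤ} (ha : ∀ n, a n ≠ 0)
    (hconv : IsConvergents a p q)
    {A B : ℕ → ℤ × ℤ} (hA0 : A 0 = (1, 0)) (hB0 : B 0 = (0, 1))
    (hA : ∀ k : ℕ, A (k + 1) = (q (2 * k), p (2 * k)))
    (hB : ∀ k : ℕ, B (k + 1) = (q (2 * k + 1), p (2 * k + 1))) (k : ℕ) :
    lsin (A k) (A (k + 1)) (A (k + 2)) = (llen (B k) (B (k + 1)) : ℚ) ∧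
      lsin (B k) (B (k + 1)) (B (k + 2)) = (llen (A (k + 1)) (A (k + 2)) : ℚ) := by
  have A_eq (k : ℕ) : A k = sailVertex a (2 * k) := by
    cases k with
    | zero => exact hA0
    | succ k => rw [hA, ← hconv.sailVertex_add_two_eq, mul_add_one]
  have B_eq (k : ℕ) : B k = sailVertex a (2 * k + 1) := by
    cases k with
    | zero => exact hB0
    | succ k => rw [hB, ← hconv.sailVertex_add_two_eq, mul_add_one, add_right_comm]
  simp only [A_eq, B_eq]
  exact ⟨lsin_sailVertex_eq_llen (ha _) (ha _), lsin_sailVertex_eq_llen (ha _) (ha _)⟩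

/-- Edge–angle duality between the two Klein sails (Karpenkov): with sail vertices
`A₋₁ = (1,0)`, `Aₖ = (q₂ₖ, p₂ₖ)` of the lower sail and `B₋₁ = (0,1)`, `Bₖ = (q₂ₖ₊₁, p₂ₖ₊₁)`
of the upper sail (here `A (k+1)`, `B (k+1)` stand for `Aₖ`, `Bₖ`), for every `k ≥ 0`:
`lsin∠Aₖ₋₁AₖAₖ₊₁ = ll(Bₖ₋₁Bₖ)` and `lsin∠Bₖ₋₁BₖBₖ₊₁ = ll(AₖAₖ₊₁)`. -/
theorem edge_angle_duality (ω : ℝ) (hω : 1 < ω) (hirr : Irrational ω)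
    (a p q : ℕ → ℤ) (hcf : IsCFExpansion ω a) (hconv : IsConvergents a p q)
    (A B : ℕ → ℤ × ℤ) (hA0 : A 0 = (1, 0)) (hB0 : B 0 = (0, 1))
    (hA : ∀ k : ℕ, A (k + 1) = (q (2 * k), p (2 * k)))
    (hB : ∀ k : ℕ, B (k + 1) = (q (2 * k + 1), p (2 * k + 1))) :
    ∀ k : ℕ, lsin (A k) (A (k + 1)) (A (k + 2)) = (llen (B k) (B (k + 1)) : ℚ) ∧
      lsin (B k) (B (k + 1)) (B (k + 2)) = (llen (A (k + 1)) (A (k + 2)) : ℚ) :=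
  edge_angle_duality_general (fun n ↦ (hcf.pos hω hirr n).ne') hconv hA0 hB0 hA hB
end

section
/- Existence of the Conway river: let Q(x, y) = ax² + hxy + by² be a binary quadratic form with real coefficients that is indefinite (h² − 4ab > 0) and does not represent zero on the lattice, i.e. Q(x, y) ≠ 0 for every (x, y) ∈ ℤ² \ {(0, 0)}. Then there exists a ℤ-basis (u, v) of ℤ² with Q(u) > 0 and Q(v) < 0; equivalently, the topograph of Q contains an edge separating a positive and a negative value, so the Conway river of Q is nonempty. -/
/-- `(u, v)` is a ℤ-basis of the lattice ℤ²: every lattice vector is an integer linear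
combination of `u` and `v`. -/
def IsZBasis (u v : ℤ × ℤ) : Prop := ∀ w : ℤ × ℤ, ∃ m n : ℤ, w = m • u + n • v

/-!
The form `Q` takes values of both signs on primitive vectors. Indeed, let `a = Q(1, 0) > 0`, the
other case being symmetric, and complete the square: `4aQ(x, y) = (2ax + hy)² - (h² - 4ab)y²`. For
every `y` some `x` makes the first square at most `a²`, while the subtracted term is unbounded in
`y`; so `Q` is negative at some lattice vector, and it stays negative after division by the gcd.

On the other hand, any two primitive vectors are joined by a chain in which consecutive vectors
form a basis: this is Euclid's algorithm on the second coordinate. The sign of `Q` must change at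
some step of such a chain.
-/

namespace IsZBasis

open Relation

variable {u v : ℤ × ℤ}

protected theorem symm (huv : IsZBasis u v) : IsZBasis v u := fun w ↦
  let ⟨m, n, hw⟩ := huv w
  ⟨n, m, hw.trans (add_comm _ _)⟩

instance : Std.Symm IsZBasis := ⟨fun _ _ ↦ IsZBasis.symm⟩

theorem of_isUnit_det (hdet : IsUnit (u.1 * v.2 - u.2 * v.1)) : IsZBasis u v := by
  obtain ⟨e, he⟩ := hdet.exists_left_inv
  intro w
  -- Cramer's rule
  refine ⟨e * (w.1 * v.2 - w.2 * v.1), e * (u.1 * w.2 - u.2 * w.1), ?_⟩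
  ext
  · simp only [Prod.fst_add, Prod.smul_fst, smul_eq_mul]
    linear_combination -w.1 * he
  · simp only [Prod.snd_add, Prod.smul_snd, smul_eq_mul]
    linear_combination -w.2 * he

theorem isUnit_det (huv : IsZBasis u v) : IsUnit (u.1 * v.2 - u.2 * v.1) := by
  obtain ⟨m, n, h₁⟩ := huv (1, 0)
  obtain ⟨m', n', h₂⟩ := huv (0, 1)
  simp only [Prod.ext_iff, Prod.fst_add, Prod.snd_add, Prod.smul_fst, Prod.smul_snd,
    smul_eq_mul] at h₁ h₂
  refine IsUnit.of_mul_eq_one (m * n' - n * m') ?_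
  linear_combination -h₁.1 * (m' * u.2 + n' * v.2) + h₁.2 * (m' * u.1 + n' * v.1) - h₂.2

theorem isCoprime_left (huv : IsZBasis u v) : IsCoprime u.1 u.2 := by
  obtain ⟨e, he⟩ := huv.isUnit_det.exists_left_inv
  exact ⟨e * v.2, -e * v.1, by linear_combination he⟩

theorem ne_zero_right (huv : IsZBasis u v) : v ≠ 0 := by
  rintro rfl
  exact not_isCoprime_zero_zero huv.symm.isCoprime_left

theorem sub_smul_right (huv : IsZBasis u v) (k : ℤ) : IsZBasis u (v - k • u) := by
  intro w
  obtain ⟨m, n, rfl⟩ := huv w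
  exact ⟨m + n * k, n, by module⟩

theorem exists_natAbs_snd_lt (hv : IsCoprime v.1 v.2) (hv₀ : v.2 ≠ 0) :
    ∃ w : ℤ × ℤ, IsZBasis v w ∧ w.2.natAbs < v.2.natAbs := by
  obtain ⟨p, q, hpq⟩ := hv
  have hdet : v.1 * p - v.2 * -q = 1 := by linear_combination hpq
  have hbasis : IsZBasis v (-q, p) := of_isUnit_det (hdet ▸ isUnit_one)
  refine ⟨(-q, p) - (p / v.2) • v, hbasis.sub_smul_right _, ?_⟩
  have hmod : ((-q, p) - (p / v.2) • v).2 = p % v.2 := by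
    simp only [Prod.snd_sub, Prod.smul_snd, smul_eq_mul]
    linear_combination -Int.emod_add_mul_ediv p v.2
  have hnonneg := Int.emod_nonneg p hv₀
  have hlt := Int.emod_lt p hv₀
  omega

theorem reflTransGen_one_zero (hv : IsCoprime v.1 v.2) : ReflTransGen IsZBasis v (1, 0) := by
  induction hn : v.2.natAbs using Nat.strong_induction_on generalizing v with
  | _ n ih =>
    by_cases hv₀ : v.2 = 0
    · have hunit : IsUnit v.1 := by rwa [hv₀, isCoprime_zero_right] at hv
      have hleft : IsZBasis v (0, 1) := of_isUnit_det (by simpa using hunit)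
      have hright : IsZBasis (0, 1) (1, 0) := of_isUnit_det (by simp)
      exact .head hleft (.single hright)
    · obtain ⟨w, hvw, hlt⟩ := exists_natAbs_snd_lt hv hv₀
      exact .head hvw (ih _ (hn ▸ hlt) hvw.symm.isCoprime_left rfl)

theorem reflTransGen_of_isCoprime (hu : IsCoprime u.1 u.2) (hv : IsCoprime v.1 v.2) :
    ReflTransGen IsZBasis u v :=
  (reflTransGen_one_zero hu).trans (symm (reflTransGen_one_zero hv))

theorem exists_mem_notMem {S : Set (ℤ × ℤ)} (hu : IsCoprime u.1 u.2) (hv : IsCoprime v.1 v.2)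
    (huS : u ∈ S) (hvS : v ∉ S) : ∃ u' v', IsZBasis u' v' ∧ u' ∈ S ∧ v' ∉ S := by
  by_contra! hclosed
  have hmem : ∀ w, ReflTransGen IsZBasis u w → w ∈ S := fun w hw ↦ by
    induction hw with
    | refl => exact huS
    | tail _ hbasis ih => exact hclosed _ _ hbasis ih
  exact hvS (hmem v (reflTransGen_of_isCoprime hu hv))

end IsZBasis

section BinaryForm

variable {R : Type*} [CommRing R]

/-- The binary quadratic form `ax² + hxy + by²` over `R`, as a function on the lattice `ℤ²`. -/
def binaryForm (a h b : R) (v : ℤ × ℤ) : R :=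
  a * (v.1 : R) ^ 2 + h * (v.1 : R) * (v.2 : R) + b * (v.2 : R) ^ 2

variable {a h b : R}

theorem binaryForm_neg (v : ℤ × ℤ) : binaryForm (-a) (-h) (-b) v = -binaryForm a h b v := by
  simp only [binaryForm]
  ring

theorem binaryForm_smul (k : ℤ) (v : ℤ × ℤ) :
    binaryForm a h b (k • v) = (k : R) ^ 2 * binaryForm a h b v := by
  simp only [binaryForm, Prod.smul_fst, Prod.smul_snd, smul_eq_mul, Int.cast_mul]
  ring

theorem four_mul_mul_binaryForm (v : ℤ × ℤ) :
    4 * a * binaryForm a h b v =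
      (2 * a * (v.1 : R) + h * (v.2 : R)) ^ 2 - discrim a h b * (v.2 : R) ^ 2 := by
  simp only [binaryForm, discrim]
  ring

variable [LinearOrder R] [IsStrictOrderedRing R]

theorem exists_isCoprime_binaryForm_neg {v : ℤ × ℤ} (hneg : binaryForm a h b v < 0) :
    ∃ w : ℤ × ℤ, IsCoprime w.1 w.2 ∧ binaryForm a h b w < 0 := by
  have hgcd : 0 < Int.gcd v.1 v.2 := by
    refine Nat.pos_of_ne_zero fun h₀ ↦ hneg.ne ?_
    obtain ⟨h₁, h₂⟩ := Int.gcd_eq_zero_iff.1 h₀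
    simp [binaryForm, h₁, h₂]
  obtain ⟨x, y, hxy, hx, hy⟩ := Int.exists_gcd_one hgcd
  have hv : v = (Int.gcd v.1 v.2 : ℤ) • (x, y) :=
    Prod.ext (hx.trans (mul_comm _ _)) (hy.trans (mul_comm _ _))
  rw [hv, binaryForm_smul] at hneg
  exact ⟨(x, y), Int.isCoprime_iff_gcd_eq_one.2 hxy, neg_of_mul_neg_right hneg (sq_nonneg _)⟩

variable [Archimedean R]

theorem exists_binaryForm_neg (ha : 0 < a) (hdisc : 0 < discrim a h b) :
    ∃ v : ℤ × ℤ, binaryForm a h b v < 0 := by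
  obtain ⟨n, hn⟩ : ∃ n : ℕ, a ^ 2 < n • discrim a h b := exists_lt_nsmul hdisc _
  obtain ⟨m, ⟨hlo, hhi⟩, -⟩ :=
    existsUnique_sub_zsmul_mem_Ico (mul_pos two_pos ha) (h * (n : R)) (-a)
  refine ⟨(-m, n), ?_⟩
  have hsq : (2 * a * ((-m : ℤ) : R) + h * ((n : ℤ) : R)) ^ 2 ≤ a ^ 2 := by
    rw [zsmul_eq_mul] at hlo hhi
    push_cast
    exact sq_le_sq' (by linarith) (by linarith)
  have hdom : a ^ 2 < discrim a h b * ((n : ℤ) : R) ^ 2 := by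
    have hle : (n : R) ≤ (n : R) ^ 2 := by exact_mod_cast Nat.le_self_pow two_ne_zero n
    calc a ^ 2 < discrim a h b * (n : R) := by rwa [nsmul_eq_mul, mul_comm] at hn
      _ ≤ discrim a h b * ((n : ℤ) : R) ^ 2 := by
        rw [Int.cast_natCast]
        gcongr
  refine neg_of_mul_neg_right (a := 4 * a) ?_ (by positivity)
  rw [four_mul_mul_binaryForm]
  linarith

theorem exists_isZBasis_binaryForm_pos_neg (ha : 0 < a) (hdisc : 0 < discrim a h b)
    (hnz : ∀ v : ℤ × ℤ, v ≠ 0 → binaryForm a h b v ≠ 0) :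
    ∃ u v : ℤ × ℤ, IsZBasis u v ∧ 0 < binaryForm a h b u ∧ binaryForm a h b v < 0 := by
  obtain ⟨v₀, hv₀⟩ := exists_binaryForm_neg ha hdisc
  obtain ⟨v₁, hcop, hv₁⟩ := exists_isCoprime_binaryForm_neg hv₀
  obtain ⟨u, v, huv, hu, hv⟩ := IsZBasis.exists_mem_notMem (u := (1, 0))
    (S := {w | 0 < binaryForm a h b w}) isCoprime_one_left hcop
    (by simpa [binaryForm] using ha) hv₁.not_gt
  exact ⟨u, v, huv, hu, (not_lt.1 hv).lt_of_ne (hnz v huv.ne_zero_right)⟩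

theorem conway_river_exists_general (hdisc : 0 < discrim a h b)
    (hnz : ∀ v : ℤ × ℤ, v ≠ 0 → binaryForm a h b v ≠ 0) :
    ∃ u v : ℤ × ℤ, IsZBasis u v ∧ 0 < binaryForm a h b u ∧ binaryForm a h b v < 0 := by
  have ha : a ≠ 0 := by simpa [binaryForm] using hnz (1, 0) (by simp)
  rcases ha.lt_or_gt with ha | ha
  · obtain ⟨u, v, huv, hu, hv⟩ := exists_isZBasis_binaryForm_pos_neg (neg_pos.2 ha)
      (h := -h) (b := -b) (by simpa [discrim] using hdisc) (by simpa [binaryForm_neg] using hnz)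
    simp only [binaryForm_neg, neg_pos, neg_lt_zero] at hu hv
    exact ⟨v, u, huv.symm, hv, hu⟩
  · exact exists_isZBasis_binaryForm_pos_neg ha hdisc hnz

end BinaryForm

/-- Existence of the Conway river: if `Q(x,y) = ax² + hxy + by²` is a real indefinite binary
quadratic form (`h² − 4ab > 0`) not representing zero on `ℤ² \ {0}`, then there is a ℤ-basis
`(u, v)` of ℤ² with `Q(u) > 0` and `Q(v) < 0`, i.e. the topograph of `Q` contains an edge
separating a positive and a negative value, so the Conway river of `Q` is nonempty. -/
theorem conway_river_exists (a h b : ℝ) (hind : 0 < h ^ 2 - 4 * a * b)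
    (Q : ℤ × ℤ → ℝ)
    (hQ : ∀ v : ℤ × ℤ, Q v = a * (v.1 : ℝ) ^ 2 + h * (v.1 : ℝ) * (v.2 : ℝ) + b * (v.2 : ℝ) ^ 2)
    (hnz : ∀ v : ℤ × ℤ, v ≠ 0 → Q v ≠ 0) :
    ∃ u v : ℤ × ℤ, IsZBasis u v ∧ 0 < Q u ∧ Q v < 0 := by
  obtain rfl : Q = binaryForm a h b := funext hQ
  exact conway_river_exists_general hind hnz
end

section
/- The modular group is the free product of cyclic groups of orders 2 and 3: the quotient PSL(2, ℤ) of the group SL(2, ℤ) of 2×2 integer matrices of determinant 1 by its center {I, −I} is isomorphic as a group to the free product (ℤ/2ℤ) * (ℤ/3ℤ). -/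
/-!
Let `s` and `u` be the classes of `S` and `T * S` in `PSL(2, ℤ)`. They have orders dividing 2 and 3,
and generate because `S` and `T` generate `SL(2, ℤ)`. There are no further relations by ping-pong:
writing `a / c` for the image of `∞` under a class with first column `(a, c)`, the Möbius
transformation `s : t ↦ -1 / t` makes positive numbers negative, while `u : t ↦ 1 - 1 / t` and
`u⁻¹ : t ↦ 1 / (1 - t)` make negative numbers positive. The product `a * c` records the sign of
`a / c` without excluding `c = 0`.
-/

open Cardinal Matrix ModularGroup Monoid Multiplicative
open scoped MatrixGroups Pointwise

section Coprod

universe u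

/-- The free product of two monoids as the free product of the family they form, with `Bool` as
index type; it transfers results on `Monoid.CoprodI` to `Monoid.Coprod`. -/
def coprodMulEquivCoprodI (M : Bool → Type*) [∀ b, Monoid (M b)] :
    Coprod (M false) (M true) ≃* CoprodI M :=
  MonoidHom.toMulEquiv (Coprod.lift CoprodI.of CoprodI.of)
    (CoprodI.lift fun | false => Coprod.inl | true => Coprod.inr)
    (by ext <;> simp)
    (by ext b x; cases b <;> simp)

theorem coprod_lift_injective_of_ping_pong {G H : Type u} {K α : Type*} [Group G] [Group H]
    [Group K] [MulAction K α] (f : G →* K) (g : H →* K) (hcard : 3 ≤ #G ∨ 3 ≤ #H)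
    {X Y : Set α} (hX : X.Nonempty) (hY : Y.Nonempty) (hXY : Disjoint X Y)
    (hf : ∀ a ≠ 1, f a • Y ⊆ X) (hg : ∀ b ≠ 1, g b • X ⊆ Y) :
    Function.Injective (Coprod.lift f g) := by
  let M : Bool → Type u := fun b => bif b then H else G
  let : ∀ b, Group (M b) := fun | false => ‹Group G› | true => ‹Group H›
  let φ : ∀ b, M b →* K := fun | false => f | true => g
  let Z : Bool → Set α := fun b => bif b then Y else X
  have φ_injective : Function.Injective (CoprodI.lift φ) := by
    refine CoprodI.lift_injective_of_ping_pong φ (.inr ?_) Z ?_ ?_ ?_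
    · exact hcard.elim (⟨false, ·⟩) (⟨true, ·⟩)
    · exact fun | false => hX | true => hY
    · rintro (_ | _) (_ | _) hne
      exacts [(hne rfl).elim, hXY, hXY.symm, (hne rfl).elim]
    · rintro (_ | _) (_ | _) hne
      exacts [(hne rfl).elim, hf, hg, (hne rfl).elim]
  have lift_eq : Coprod.lift f g = (CoprodI.lift φ).comp (coprodMulEquivCoprodI M).toMonoidHom := by
    apply Coprod.hom_ext <;> ext x
    · exact (CoprodI.lift_of (fi := φ) (i := false) x).symm
    · exact (CoprodI.lift_of (fi := φ) (i := true) x).symm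
  rw [lift_eq]
  exact φ_injective.comp (coprodMulEquivCoprodI M).injective

end Coprod

section ZModPowersHom

variable {G : Type*} [Group G] (n : ℕ) {g : G}

/-- The homomorphism `k ↦ g ^ k` from `ℤ/nℤ`, written multiplicatively, for an element `g` with
`g ^ n = 1`. -/
def zmodPowersHom (hg : g ^ n = 1) : Multiplicative (ZMod n) →* G :=
  (ZMod.lift n ⟨zmultiplesHom (Additive G) (Additive.ofMul g), by
    simp [← ofMul_pow, hg]⟩).toMultiplicativeLeft

theorem zmodPowersHom_ofAdd_intCast (hg : g ^ n = 1) (k : ℤ) :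
    zmodPowersHom n hg (ofAdd (k : ZMod n)) = g ^ k := by
  simp [zmodPowersHom]

@[simp]
theorem zmodPowersHom_ofAdd_one (hg : g ^ n = 1) : zmodPowersHom n hg (ofAdd 1) = g := by
  simpa using zmodPowersHom_ofAdd_intCast n hg 1

theorem range_zmodPowersHom (hg : g ^ n = 1) :
    (zmodPowersHom n hg).range = Subgroup.zpowers g := by
  ext x
  simp [Subgroup.mem_zpowers_iff, ZMod.intCast_surjective.exists, ofAdd.surjective.exists,
    zmodPowersHom_ofAdd_intCast]

end ZModPowersHom

section FirstColProd

variable {R : Type*} [CommRing R]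

theorem mul_apply_mul_mul_apply_of_mem_center (g : SL(2, R)) {z : SL(2, R)}
    (hz : z ∈ Subgroup.center SL(2, R)) (i j k l : Fin 2) :
    (g * z) i j * (g * z) k l = g i j * g k l := by
  obtain ⟨r, hr, hrz⟩ := Matrix.SpecialLinearGroup.mem_center_iff.mp hz
  have r_sq : r ^ 2 = 1 := hr
  simp only [Matrix.SpecialLinearGroup.coe_mul, ← hrz, scalar_apply, mul_diagonal]
  linear_combination (g i j * g k l) * r_sq

/-- The product of the two entries in the first column, which is well defined on `PSL(2, R)` because
central elements are scalars of square one. -/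
def firstColProd : PSL(2, R) → R :=
  Quotient.lift (fun g : SL(2, R) => g 0 0 * g 1 0) fun g h hgh => by
    simpa using (mul_apply_mul_mul_apply_of_mem_center g
      (QuotientGroup.leftRel_apply.mp hgh) 0 0 1 0).symm

theorem firstColProd_mk (g : SL(2, R)) : firstColProd (g : PSL(2, R)) = g 0 0 * g 1 0 :=
  rfl

end FirstColProd

theorem mk_center_neg_one {G : Type*} [Group G] [HasDistribNeg G] :
    ((-1 : G) : G ⧸ Subgroup.center G) = 1 := by
  rw [QuotientGroup.eq_one_iff, Subgroup.mem_center_iff]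
  simp

/-- The class of `S` in `PSL(2, ℤ)`, generating the factor of order two. -/
def pslS : PSL(2, ℤ) := S

/-- The class of `T * S` in `PSL(2, ℤ)`, generating the factor of order three. -/
def pslU : PSL(2, ℤ) := ↑(T * S)

theorem pslS_sq : pslS ^ 2 = 1 := by
  have S_sq : S ^ 2 = -1 := by decide
  rw [pslS, ← QuotientGroup.mk_pow, S_sq, mk_center_neg_one]

theorem pslU_pow_three : pslU ^ 3 = 1 := by
  have TS_pow_three : (T * S) ^ 3 = -1 := by decide
  rw [pslU, ← QuotientGroup.mk_pow, TS_pow_three, mk_center_neg_one]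

theorem zpowers_pslS_sup_zpowers_pslU : Subgroup.zpowers pslS ⊔ Subgroup.zpowers pslU = ⊤ := by
  set P := Subgroup.zpowers pslS ⊔ Subgroup.zpowers pslU
  have s_mem : pslS ∈ P := Subgroup.mem_sup_left (Subgroup.mem_zpowers pslS)
  have u_mem : pslU ∈ P := Subgroup.mem_sup_right (Subgroup.mem_zpowers pslU)
  have T_mem : (T : PSL(2, ℤ)) ∈ P := by
    have T_eq : (T : PSL(2, ℤ)) = pslU * pslS⁻¹ := by simp [pslU, pslS]
    exact T_eq ▸ mul_mem u_mem (inv_mem s_mem)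
  have generators_le : Subgroup.closure {S, T} ≤ P.comap (QuotientGroup.mk' _) := by
    rw [Subgroup.closure_le]
    rintro _ (rfl | rfl)
    exacts [s_mem, T_mem]
  rw [SpecialLinearGroup.SL2Z_generators] at generators_le
  exact (Subgroup.eq_top_iff' P).mpr <|
    QuotientGroup.mk_surjective.forall.mpr fun g => generators_le (Subgroup.mem_top g)

theorem firstColProd_pslS_mul (x : PSL(2, ℤ)) : firstColProd (pslS * x) = -firstColProd x := by
  induction x using QuotientGroup.induction_on with | H g =>
  rw [pslS, ← QuotientGroup.mk_mul, firstColProd_mk, firstColProd_mk]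
  simp [coe_S, mul_apply, mul_comm]

theorem neg_firstColProd_le_pslU_mul (x : PSL(2, ℤ)) :
    -firstColProd x ≤ firstColProd (pslU * x) := by
  induction x using QuotientGroup.induction_on with | H g =>
  rw [pslU, ← QuotientGroup.mk_mul, firstColProd_mk, firstColProd_mk]
  have entries : (T * S * g) 0 0 = g 0 0 - g 1 0 ∧ (T * S * g) 1 0 = g 0 0 := by
    simp [coe_S, coe_T, mul_apply, sub_eq_add_neg]
  rw [entries.1, entries.2]
  linarith [sq_nonneg (g 0 0)]

theorem neg_firstColProd_le_pslU_inv_mul (x : PSL(2, ℤ)) :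
    -firstColProd x ≤ firstColProd (pslU⁻¹ * x) := by
  induction x using QuotientGroup.induction_on with | H g =>
  rw [pslU, ← QuotientGroup.mk_inv, ← QuotientGroup.mk_mul, firstColProd_mk, firstColProd_mk]
  have entries :
      ((T * S)⁻¹ * g) 0 0 = g 1 0 ∧ ((T * S)⁻¹ * g) 1 0 = g 1 0 - g 0 0 := by
    simp [coe_S, coe_T, mul_apply, adjugate_fin_two, sub_eq_add_neg, add_comm]
  rw [entries.1, entries.2]
  linarith [sq_nonneg (g 1 0)]

theorem firstColProd_pslU : firstColProd pslU = 1 := by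
  decide

/-- The comparison homomorphism from `(ℤ/2ℤ) ∗ (ℤ/3ℤ)` to `PSL(2, ℤ)`, sending the generators of the
two factors to `pslS` and `pslU`. -/
def coprodToPSL : Coprod (Multiplicative (ZMod 2)) (Multiplicative (ZMod 3)) →* PSL(2, ℤ) :=
  Coprod.lift (zmodPowersHom 2 pslS_sq) (zmodPowersHom 3 pslU_pow_three)

theorem coprodToPSL_injective : Function.Injective coprodToPSL := by
  have eq_of_ne_one₂ : ∀ a : Multiplicative (ZMod 2), a ≠ 1 → a = ofAdd 1 := by decide
  have eq_of_ne_one₃ : ∀ b : Multiplicative (ZMod 3), b ≠ 1 → b = ofAdd 1 ∨ b = (ofAdd 1)⁻¹ := by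
    decide
  refine coprod_lift_injective_of_ping_pong (X := {x | firstColProd x < 0})
    (Y := {x | 0 < firstColProd x}) _ _ (.inr ?_) ⟨pslS * pslU, ?_⟩ ⟨pslU, ?_⟩ ?_ ?_ ?_
  · simp
  · simp [firstColProd_pslS_mul, firstColProd_pslU]
  · simp [firstColProd_pslU]
  · exact Set.disjoint_left.mpr fun _ hneg => lt_asymm (Set.mem_ofPred.mp hneg)
  · rintro a ha _ ⟨x, hx : 0 < firstColProd x, rfl⟩
    rw [eq_of_ne_one₂ a ha, zmodPowersHom_ofAdd_one]
    exact (firstColProd_pslS_mul x).trans_lt (neg_neg_of_pos hx)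
  · rintro b hb _ ⟨x, hx : firstColProd x < 0, rfl⟩
    obtain rfl | rfl := eq_of_ne_one₃ b hb
    · rw [zmodPowersHom_ofAdd_one]
      exact (neg_pos_of_neg hx).trans_le (neg_firstColProd_le_pslU_mul x)
    · rw [map_inv, zmodPowersHom_ofAdd_one]
      exact (neg_pos_of_neg hx).trans_le (neg_firstColProd_le_pslU_inv_mul x)

theorem coprodToPSL_surjective : Function.Surjective coprodToPSL := by
  rw [← MonoidHom.range_eq_top, coprodToPSL, Coprod.range_lift, range_zmodPowersHom,
    range_zmodPowersHom, zpowers_pslS_sup_zpowers_pslU]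

/-- The modular group is the free product of cyclic groups of orders 2 and 3:
`PSL(2, ℤ) = SL(2, ℤ)/{±I}` is isomorphic to `(ℤ/2ℤ) ∗ (ℤ/3ℤ)`. -/
theorem psl2z_iso_free_product_Z2_Z3 :
    Nonempty ((Matrix.SpecialLinearGroup (Fin 2) ℤ ⧸
        Subgroup.center (Matrix.SpecialLinearGroup (Fin 2) ℤ)) ≃*
      Monoid.Coprod (Multiplicative (ZMod 2)) (Multiplicative (ZMod 3))) :=
  ⟨(MulEquiv.ofBijective coprodToPSL ⟨coprodToPSL_injective, coprodToPSL_surjective⟩).symm⟩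
end
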